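/- Fix an integer n ≥ 1. Then lim_{H→0⁺} f(H,n) = (1/√2)·E[(max_{1≤i≤n} ξ_i − ξ_0)⁺], where ξ_0, ξ_1, …, ξ_n are i.i.d. standard normal random variables and x⁺ := max{0, x}. (Equivalently, the limit equals E[max_{0≤i≤n} Z_{i/n}] for Z_t = (ξ_t − ξ_0)/√2 with i.i.d. standard normal (ξ_t).) -/

import Mathlib

open MeasureTheory ProbabilityTheory Real Set Filter Topology

noncomputable section

/-- `X` is a centered Gaussian process on the time set `S`: every finite linear
combination `∑ i, c i * X (ts i)` of its values at times in `S` is a centered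
Gaussian random variable. -/
def IsCenteredGaussianOn {Ω : Type} [MeasurableSpace Ω] (μ : Measure Ω)
    (X : ℝ → Ω → ℝ) (S : Set ℝ) : Prop :=
  (∀ t ∈ S, Measurable (X t)) ∧
  ∀ (k : ℕ) (c : Fin k → ℝ) (ts : Fin k → ℝ), (∀ i, ts i ∈ S) →
    ∃ v : NNReal, μ.map (fun ω => ∑ i, c i * X (ts i) ω) = gaussianReal 0 v

/-- The `L²`-norm `‖Y‖₂ = (E Y²)^{1/2}` of a real random variable. -/
def l2norm {Ω : Type} [MeasurableSpace Ω] (μ : Measure Ω) (Y : Ω → ℝ) : ℝ :=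
  Real.sqrt (∫ ω, (Y ω) ^ 2 ∂μ)

/-- The expected supremum `E [sup_{0 ≤ t ≤ 1} X_t]`. -/
def expMax {Ω : Type} [MeasurableSpace Ω] (μ : Measure Ω) (X : ℝ → Ω → ℝ) : ℝ :=
  ∫ ω, (⨆ t : Icc (0:ℝ) 1, X t.1 ω) ∂μ

/-- The expected maximum over the grid: `E [max_{0 ≤ i ≤ n} X_{i/n}]`. -/
def expMaxGrid {Ω : Type} [MeasurableSpace Ω] (μ : Measure Ω) (X : ℝ → Ω → ℝ) (n : ℕ) : ℝ :=
  ∫ ω, (⨆ i : Fin (n + 1), X (((i : ℕ) : ℝ) / (n : ℝ)) ω) ∂μ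

/-- `B` is a fractional Brownian motion with Hurst parameter `H`: a centered Gaussian
process on `[0,∞)` with a.s. continuous sample paths, `B 0 = 0`, and covariance
`E[B_s B_t] = (s^{2H} + t^{2H} - |t-s|^{2H}) / 2`. -/
def IsFBM {Ω : Type} [MeasurableSpace Ω] (μ : Measure Ω) (H : ℝ) (B : ℝ → Ω → ℝ) : Prop :=
  IsCenteredGaussianOn μ B (Ici 0) ∧
  (∀ᵐ ω ∂μ, ContinuousOn (fun t => B t ω) (Ici 0)) ∧
  (∀ᵐ ω ∂μ, B 0 ω = 0) ∧
  ∀ s t : ℝ, 0 ≤ s → 0 ≤ t →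
    ∫ ω, B s ω * B t ω ∂μ = (s ^ (2 * H) + t ^ (2 * H) - |t - s| ^ (2 * H)) / 2

/-!
A Gaussian vector with mean `m` and covariance matrix `S` has the law of `m + √S ξ` with `ξ`
standard Gaussian. Since `S ↦ √S` is continuous on positive semidefinite matrices, dominated
convergence shows that the expectation of a continuous function of linear growth, such as the
maximum of the coordinates, depends continuously on `(m, S)`. As `H → 0⁺`, `|s| ^ (2H)` tends to
`0` for `s = 0` and to `1` otherwise, so the covariance of fractional Brownian motion on a finite
grid containing `0` converges to that of `(ξ_i - ξ_0) / √2` with i.i.d. standard normal `ξ_i`.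
-/

section MultivariateGaussian

open scoped MatrixOrder

variable {ι : Type*} [Fintype ι] [DecidableEq ι]

open scoped Matrix.Norms.L2Operator in
lemma continuousOn_toEuclideanCLM_sqrt :
    ContinuousOn (fun S : Matrix ι ι ℝ => Matrix.toEuclideanCLM (𝕜 := ℝ) (CFC.sqrt S))
      {S | S.PosSemidef} := by
  have hsqrt : ContinuousOn (CFC.sqrt : Matrix ι ι ℝ → Matrix ι ι ℝ) {S | S.PosSemidef} := by
    simpa only [Matrix.nonneg_iff_posSemidef] using
      CFC.continuousOn_sqrt (A := Matrix ι ι ℝ)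
  have hCLM : Continuous (Matrix.toEuclideanCLM (n := ι) (𝕜 := ℝ)) :=
    LinearMap.continuous_of_finiteDimensional
      (Matrix.toEuclideanCLM (n := ι) (𝕜 := ℝ)).toAlgEquiv.toLinearMap
  exact hCLM.comp_continuousOn hsqrt

lemma integral_multivariateGaussian {G : Type*} [NormedAddCommGroup G] [NormedSpace ℝ G]
    {f : EuclideanSpace ℝ ι → G} (m : EuclideanSpace ℝ ι) (S : Matrix ι ι ℝ)
    (hf : AEStronglyMeasurable f (multivariateGaussian m S)) :
    ∫ x, f x ∂multivariateGaussian m S =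
      ∫ x, f (m + Matrix.toEuclideanCLM (𝕜 := ℝ) (CFC.sqrt S) x)
        ∂stdGaussian (EuclideanSpace ℝ ι) :=
  integral_map (by fun_prop) hf

theorem tendsto_integral_multivariateGaussian {α G : Type*} {l : Filter α}
    [l.IsCountablyGenerated] [NormedAddCommGroup G] [NormedSpace ℝ G]
    {m : α → EuclideanSpace ℝ ι} {m₀ : EuclideanSpace ℝ ι}
    {S : α → Matrix ι ι ℝ} {S₀ : Matrix ι ι ℝ}
    (hm : Tendsto m l (𝓝 m₀)) (hS : Tendsto S l (𝓝 S₀))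
    (hpos : ∀ᶠ a in l, (S a).PosSemidef) (hpos₀ : S₀.PosSemidef)
    {f : EuclideanSpace ℝ ι → G} (hf : Continuous f) {C : ℝ}
    (hC : ∀ x, ‖f x‖ ≤ C * (1 + ‖x‖)) :
    Tendsto (fun a => ∫ x, f x ∂multivariateGaussian (m a) (S a)) l
      (𝓝 (∫ x, f x ∂multivariateGaussian m₀ S₀)) := by
  set A : Matrix ι ι ℝ → EuclideanSpace ℝ ι →L[ℝ] EuclideanSpace ℝ ι :=
    fun S => Matrix.toEuclideanCLM (𝕜 := ℝ) (CFC.sqrt S)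
  have hA : Tendsto (fun a => A (S a)) l (𝓝 (A S₀)) :=
    (continuousOn_toEuclideanCLM_sqrt S₀ hpos₀).tendsto.comp
      (tendsto_nhdsWithin_iff.2 ⟨hS, hpos⟩)
  have hC0 : 0 ≤ C := by simpa using (norm_nonneg _).trans (hC 0)
  simp_rw [integral_multivariateGaussian _ _ hf.aestronglyMeasurable]
  refine tendsto_integral_filter_of_dominated_convergence
    (fun x => C * (1 + ((‖m₀‖ + 1) + (‖A S₀‖ + 1) * ‖x‖)))
    (.of_forall fun a => by fun_prop) ?_ ?_ (.of_forall fun x => ?_)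
  · filter_upwards [hm.norm.eventually_lt_const (lt_add_one _),
      hA.norm.eventually_lt_const (lt_add_one _)] with a hma hAa
    refine .of_forall fun x => (hC _).trans ?_
    gcongr
    calc ‖m a + A (S a) x‖ ≤ ‖m a‖ + ‖A (S a)‖ * ‖x‖ :=
          (norm_add_le _ _).trans (by gcongr; exact (A (S a)).le_opNorm x)
      _ ≤ _ := by gcongr
  · have hx : Integrable (fun x => ‖x‖) (stdGaussian (EuclideanSpace ℝ ι)) :=
      IsGaussian.integrable_id.norm
    fun_prop
  · exact (hf.tendsto _).comp (hm.add (((continuous_eval_const x).tendsto _).comp hA))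

end MultivariateGaussian

/-- The covariance matrix `(Cov(X i, X j))ᵢⱼ` of a family of real random variables. -/
def covarianceMatrix {Ω ι : Type*} [MeasurableSpace Ω] (X : ι → Ω → ℝ) (P : Measure Ω) :
    Matrix ι ι ℝ := .of fun i j => cov[X i, X j; P]

section GaussianVector

variable {Ω ι : Type*} [MeasurableSpace Ω] {P : Measure Ω} {X : ι → Ω → ℝ}

lemma dotProduct_covarianceMatrix_mulVec [Fintype ι] [IsFiniteMeasure P]
    (hX : ∀ i, MemLp (X i) 2 P) (x y : EuclideanSpace ℝ ι) :
    x ⬝ᵥ (covarianceMatrix X P).mulVec y =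
      covarianceBilin (P.map fun ω => WithLp.toLp 2 (X · ω)) x y := by
  simp_rw [covarianceBilin_apply_pi hX, dotProduct, Matrix.mulVec, dotProduct, Finset.mul_sum,
    covarianceMatrix, Matrix.of_apply]
  congr! 2 with i _ j _
  ring

lemma posSemidef_covarianceMatrix [Finite ι] [IsFiniteMeasure P] (hX : ∀ i, MemLp (X i) 2 P) :
    (covarianceMatrix X P).PosSemidef := by
  have := Fintype.ofFinite ι
  refine .of_dotProduct_mulVec_nonneg (Matrix.IsHermitian.ext fun i j => covariance_comm _ _)
    fun x => ?_
  rw [star_trivial, ← WithLp.ofLp_toLp 2 x, dotProduct_covarianceMatrix_mulVec hX]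
  exact covarianceBilin_self_nonneg _

lemma posSemidef_covarianceMatrix_of_hasGaussianLaw [Finite ι]
    (hX : HasGaussianLaw (fun ω => (X · ω)) P) : (covarianceMatrix X P).PosSemidef :=
  have := hX.isProbabilityMeasure
  posSemidef_covarianceMatrix fun i => (hX.eval i).memLp_two

theorem map_toLp_eq_multivariateGaussian [Fintype ι] [DecidableEq ι]
    (hX : HasGaussianLaw (fun ω => (X · ω)) P) :
    P.map (fun ω => WithLp.toLp 2 (X · ω)) =
      multivariateGaussian (WithLp.toLp 2 fun i => P[X i]) (covarianceMatrix X P) := by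
  have := hX.isProbabilityMeasure
  have hL2 i : MemLp (X i) 2 P := (hX.eval i).memLp_two
  have hlaw := hX.toLp_pi 2
  have := hlaw.isGaussian_map
  refine IsGaussian.ext ?_
    (ContinuousLinearMap.ext fun x => ContinuousLinearMap.ext fun y => ?_)
  · rw [integral_map hlaw.aemeasurable (by fun_prop), integral_id_multivariateGaussian']
    ext i
    exact eval_integral_piLp (fun i => (hX.eval i).integrable) i
  · rw [covarianceBilin_multivariateGaussian (posSemidef_covarianceMatrix hL2),
      dotProduct_covarianceMatrix_mulVec hL2]

theorem hasGaussianLaw_of_forall_sum [Fintype ι] (hX : ∀ i, AEMeasurable (X i) P)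
    (h : ∀ c : ι → ℝ, HasGaussianLaw (fun ω => ∑ i, c i * X i ω) P) :
    HasGaussianLaw (fun ω => (X · ω)) P where
  isGaussian_map := by
    classical
    refine isGaussian_of_isGaussian_map fun L => ?_
    have hL : L ∘ (fun ω => (X · ω)) =
        fun ω => ∑ i, L (fun j => if i = j then 1 else 0) * X i ω := by
      ext ω
      simp_rw [mul_comm _ (X _ ω)]
      exact L.toLinearMap.pi_apply_eq_sum_univ (X · ω)
    rw [AEMeasurable.map_map_of_aemeasurable (by fun_prop) (by fun_prop), hL]
    exact (h _).isGaussian_map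

lemma integral_comp_eq_integral_multivariateGaussian [Fintype ι] [DecidableEq ι]
    {G : Type*} [NormedAddCommGroup G] [NormedSpace ℝ G]
    (hX : HasGaussianLaw (fun ω => (X · ω)) P)
    {f : (ι → ℝ) → G} (hf : StronglyMeasurable f) :
    ∫ ω, f (X · ω) ∂P = ∫ x, f x.ofLp
      ∂multivariateGaussian (WithLp.toLp 2 fun i => P[X i]) (covarianceMatrix X P) := by
  rw [← map_toLp_eq_multivariateGaussian hX]
  exact (integral_map (hX.toLp_pi 2).aemeasurable
    (hf.comp_measurable (WithLp.measurable_ofLp _ _)).aestronglyMeasurable).symm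

theorem tendsto_integral_of_tendsto_covariance [Fintype ι] {α G : Type*} {l : Filter α}
    [l.IsCountablyGenerated] [NormedAddCommGroup G] [NormedSpace ℝ G]
    {Ω' : α → Type*} [∀ a, MeasurableSpace (Ω' a)] {P' : ∀ a, Measure (Ω' a)}
    {X' : ∀ a, ι → Ω' a → ℝ}
    (hX' : ∀ᶠ a in l, HasGaussianLaw (fun ω => (X' a · ω)) (P' a))
    (hX : HasGaussianLaw (fun ω => (X · ω)) P)
    (hmean : ∀ i, Tendsto (fun a => (P' a)[X' a i]) l (𝓝 P[X i]))
    (hcov : ∀ i j, Tendsto (fun a => cov[X' a i, X' a j; P' a]) l (𝓝 cov[X i, X j; P]))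
    {f : (ι → ℝ) → G} (hf : Continuous f) {C : ℝ} (hC : ∀ x, ‖f x‖ ≤ C * (1 + ‖x‖)) :
    Tendsto (fun a => ∫ ω, f (X' a · ω) ∂P' a) l (𝓝 (∫ ω, f (X · ω) ∂P)) := by
  classical
  have hC0 : 0 ≤ C := by simpa using (norm_nonneg _).trans (hC 0)
  have hbound (x : EuclideanSpace ℝ ι) : ‖f x.ofLp‖ ≤ C * (1 + ‖x‖) := by
    refine (hC _).trans ?_
    gcongr
    exact (pi_norm_le_iff_of_nonneg (norm_nonneg _)).2 (PiLp.norm_apply_le x)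
  have hmean' : Tendsto (fun a => WithLp.toLp 2 fun i => (P' a)[X' a i]) l
      (𝓝 (WithLp.toLp 2 fun i => P[X i])) :=
    ((PiLp.continuous_toLp 2 _).tendsto _).comp (tendsto_pi_nhds.2 hmean)
  have hcov' : Tendsto (fun a => covarianceMatrix (X' a) (P' a)) l (𝓝 (covarianceMatrix X P)) :=
    tendsto_pi_nhds.2 fun i => tendsto_pi_nhds.2 (hcov i)
  rw [integral_comp_eq_integral_multivariateGaussian hX hf.stronglyMeasurable]
  refine (tendsto_integral_multivariateGaussian hmean' hcov'
    (hX'.mono fun _ => posSemidef_covarianceMatrix_of_hasGaussianLaw)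
    (posSemidef_covarianceMatrix_of_hasGaussianLaw hX) (by fun_prop) hbound).congr' ?_
  filter_upwards [hX'] with a ha
  exact (integral_comp_eq_integral_multivariateGaussian ha hf.stronglyMeasurable).symm

end GaussianVector

section Maximum

variable {ι : Type*} [Nonempty ι]

lemma continuous_iSup_eval [Finite ι] : Continuous fun x : ι → ℝ => ⨆ i, x i := by
  have := Fintype.ofFinite ι
  simp_rw [← Finset.sup'_univ_eq_ciSup]
  fun_prop

lemma abs_iSup_le_norm [Fintype ι] (x : ι → ℝ) : |⨆ i, x i| ≤ ‖x‖ := by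
  obtain ⟨i, hi⟩ := exists_eq_ciSup_of_finite (f := x)
  rw [← hi]
  exact norm_le_pi_norm x i

lemma ciSup_fin_succ {α : Type*} [ConditionallyCompleteLattice α] {n : ℕ} [NeZero n]
    (f : Fin (n + 1) → α) : ⨆ i, f i = f 0 ⊔ ⨆ i : Fin n, f i.succ := by
  rw [iSup, Fin.range_fin_succ, csSup_insert (finite_range _).bddAbove (range_nonempty _)]
  rfl

lemma iSup_sub_zero_div {n : ℕ} [NeZero n] {r : ℝ} (hr : 0 ≤ r) (x : Fin (n + 1) → ℝ) :
    ⨆ i, (x i - x 0) / r = 1 / r * max 0 ((⨆ i : Fin n, x i.succ) - x 0) := by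
  simp_rw [div_eq_mul_inv _ r]
  rw [← Real.iSup_mul_of_nonneg (inv_nonneg.2 hr), ciSup_fin_succ, sub_self,
    ← ciSup_sub (finite_range _).bddAbove, one_mul, mul_comm]

end Maximum

section StandardGaussian

variable {ι : Type*} [Fintype ι]

lemma hasGaussianLaw_pi {μ : ι → Measure ℝ} [∀ i, IsGaussian (μ i)] :
    HasGaussianLaw (fun (x : ι → ℝ) i => x i) (Measure.pi μ) := by
  refine iIndepFun.hasGaussianLaw (X := fun i (x : ι → ℝ) => x i) (fun i => ⟨?_⟩)
    (iIndepFun_pi (X := fun _ y => y) fun i => aemeasurable_id)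
  rw [show (fun x : ι → ℝ => x i) = Function.eval i from rfl, (measurePreserving_eval μ i).map_eq]
  infer_instance

lemma covariance_eval_pi_gaussianReal [DecidableEq ι] (i j : ι) :
    cov[fun x => x i, fun x => x j; Measure.pi fun _ : ι => gaussianReal 0 1] =
      if i = j then 1 else 0 := by
  have hG := hasGaussianLaw_pi (μ := fun _ : ι => gaussianReal 0 1)
  split_ifs with hij
  · subst hij
    rw [covariance_self (hG.eval i).aemeasurable]
    exact ((measurePreserving_eval (fun _ : ι => gaussianReal 0 1) i).variance_fun_comp
      aemeasurable_id).trans (by simp)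
  · have hI : iIndepFun (fun i (x : ι → ℝ) => x i) (Measure.pi fun _ : ι => gaussianReal 0 1) :=
      iIndepFun_pi (X := fun _ y => y) fun _ => aemeasurable_id
    exact (hI.indepFun hij).covariance_eq_zero (hG.eval i).memLp_two (hG.eval j).memLp_two

lemma hasGaussianLaw_sub_div {μ : ι → Measure ℝ} [∀ i, IsGaussian (μ i)] (i₀ : ι) (r : ℝ) :
    HasGaussianLaw (fun (x : ι → ℝ) i => (x i - x i₀) / r) (Measure.pi μ) := by
  let L : (ι → ℝ) →L[ℝ] ι → ℝ := .pi fun i =>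
    r⁻¹ • (.proj (R := ℝ) (φ := fun _ => ℝ) i - .proj i₀)
  refine (hasGaussianLaw_pi.map_fun L).congr (.of_forall fun x => funext fun i => ?_)
  simp [L, div_eq_inv_mul]

lemma integral_sub_div_pi_gaussianReal (i i₀ : ι) (r : ℝ) :
    ∫ x : ι → ℝ, (x i - x i₀) / r ∂(Measure.pi fun _ : ι => gaussianReal 0 1) = 0 := by
  have hint (i : ι) := ((hasGaussianLaw_pi (μ := fun _ : ι => gaussianReal 0 1)).eval i).integrable
  rw [integral_div, integral_sub (hint i) (hint i₀), integral_eval, integral_eval, sub_self,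
    zero_div]

lemma covariance_sub_div_sqrt_two_pi_gaussianReal [DecidableEq ι] (i j i₀ : ι) :
    cov[fun x => (x i - x i₀) / √2, fun x => (x j - x i₀) / √2;
      Measure.pi fun _ : ι => gaussianReal 0 1] =
      ((if i = i₀ then 0 else 1) + (if j = i₀ then 0 else 1) - (if i = j then 0 else 1)) / 2 := by
  have hL2 (i : ι) := ((hasGaussianLaw_pi (μ := fun _ : ι => gaussianReal 0 1)).eval i).memLp_two
  rw [covariance_fun_div_left, covariance_fun_div_right,
    covariance_fun_sub_fun_sub (hL2 _) (hL2 _) (hL2 _) (hL2 _), div_div,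
    Real.mul_self_sqrt zero_le_two]
  simp_rw [covariance_eval_pi_gaussianReal, eq_comm (a := i₀) (b := j)]
  split_ifs <;> norm_num

end StandardGaussian

section CenteredGaussian

variable {Ω : Type} [MeasurableSpace Ω] {μ : Measure Ω} {X : ℝ → Ω → ℝ} {S : Set ℝ}

namespace IsCenteredGaussianOn

lemma mono {T : Set ℝ} (h : IsCenteredGaussianOn μ X S) (hT : T ⊆ S) :
    IsCenteredGaussianOn μ X T :=
  ⟨fun t ht => h.1 t (hT ht), fun k c ts hts => h.2 k c ts fun i => hT (hts i)⟩

lemma exists_map_sum_eq_gaussianReal {ι : Type*} [Fintype ι] (h : IsCenteredGaussianOn μ X S)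
    {t : ι → ℝ} (ht : ∀ i, t i ∈ S) (c : ι → ℝ) :
    ∃ v, μ.map (fun ω => ∑ i, c i * X (t i) ω) = gaussianReal 0 v := by
  let e := Fintype.equivFin ι
  obtain ⟨v, hv⟩ := h.2 _ (c ∘ e.symm) (t ∘ e.symm) fun i => ht _
  refine ⟨v, hv ▸ congrArg (μ.map ·) (funext fun ω => ?_)⟩
  exact (e.symm.sum_comp fun i => c i * X (t i) ω).symm

lemma hasGaussianLaw {ι : Type*} [Finite ι] (h : IsCenteredGaussianOn μ X S)
    {t : ι → ℝ} (ht : ∀ i, t i ∈ S) : HasGaussianLaw (fun ω i => X (t i) ω) μ := by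
  have := Fintype.ofFinite ι
  refine hasGaussianLaw_of_forall_sum (fun i => (h.1 _ (ht i)).aemeasurable) fun c => ⟨?_⟩
  obtain ⟨v, hv⟩ := h.exists_map_sum_eq_gaussianReal ht c
  exact hv ▸ inferInstance

lemma integral_eq_zero (h : IsCenteredGaussianOn μ X S) {t : ℝ} (ht : t ∈ S) : μ[X t] = 0 := by
  obtain ⟨v, hv⟩ := h.exists_map_sum_eq_gaussianReal (fun _ : Unit => ht) 1
  simp only [Finset.univ_unique, Pi.one_apply, one_mul, Finset.sum_singleton] at hv
  rw [← integral_id_gaussianReal (μ := 0) (v := v), ← hv]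
  exact (integral_map (h.1 t ht).aemeasurable aestronglyMeasurable_id).symm

lemma covariance_eq_integral_mul (h : IsCenteredGaussianOn μ X S) {s t : ℝ} (hs : s ∈ S)
    (ht : t ∈ S) : cov[X s, X t; μ] = ∫ ω, X s ω * X t ω ∂μ := by
  simp only [covariance, h.integral_eq_zero hs, h.integral_eq_zero ht, sub_zero]

end IsCenteredGaussianOn

end CenteredGaussian

section FBM

/-- The covariance `E[B_s B_t]` of fractional Brownian motion with Hurst parameter `H`, for
`s, t ≥ 0`. -/
def fbmCov (H s t : ℝ) : ℝ := (s ^ (2 * H) + t ^ (2 * H) - |t - s| ^ (2 * H)) / 2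

lemma tendsto_rpow_two_mul_nhdsGT_zero (s : ℝ) :
    Tendsto (fun H : ℝ => s ^ (2 * H)) (𝓝[>] 0) (𝓝 (if s = 0 then 0 else 1)) := by
  split_ifs with h
  · refine tendsto_const_nhds.congr' ?_
    filter_upwards [self_mem_nhdsWithin] with H hH
    rw [h, Real.zero_rpow (mul_pos two_pos hH).ne']
  · have : Continuous fun H : ℝ => s ^ (2 * H) :=
      continuous_const.rpow (by fun_prop) fun _ => Or.inl h
    simpa using (this.tendsto 0).mono_left nhdsWithin_le_nhds

lemma tendsto_fbmCov_nhdsGT_zero (s t : ℝ) :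
    Tendsto (fbmCov · s t) (𝓝[>] 0)
      (𝓝 (((if s = 0 then 0 else 1) + (if t = 0 then 0 else 1) -
        (if s = t then 0 else 1)) / 2)) := by
  have hsub := tendsto_rpow_two_mul_nhdsGT_zero |t - s|
  simp only [abs_eq_zero, sub_eq_zero, eq_comm (a := t)] at hsub
  exact (((tendsto_rpow_two_mul_nhdsGT_zero s).add (tendsto_rpow_two_mul_nhdsGT_zero t)).sub
    hsub).div_const 2

variable {Ω : ℝ → Type} [∀ H, MeasurableSpace (Ω H)] {μ : ∀ H, Measure (Ω H)}
  {B : ∀ H, ℝ → Ω H → ℝ}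

theorem tendsto_integral_iSup_nhdsGT_zero {ι : Type*} [Fintype ι] {t : ι → ℝ} {i₀ : ι}
    (hB : ∀ᶠ H in 𝓝[>] 0, IsCenteredGaussianOn (μ H) (B H) (range t))
    (hcov : ∀ᶠ H in 𝓝[>] 0, ∀ i j,
      ∫ ω, B H (t i) ω * B H (t j) ω ∂μ H = fbmCov H (t i) (t j))
    (ht : t.Injective) (hi₀ : t i₀ = 0) :
    Tendsto (fun H => ∫ ω, ⨆ i, B H (t i) ω ∂μ H) (𝓝[>] 0)
      (𝓝 (∫ x, ⨆ i, (x i - x i₀) / √2 ∂(Measure.pi fun _ : ι => gaussianReal 0 1))) := by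
  classical
  have : Nonempty ι := ⟨i₀⟩
  have hzero (i : ι) : t i = 0 ↔ i = i₀ := by rw [← hi₀, ht.eq_iff]
  refine tendsto_integral_of_tendsto_covariance (X' := fun H i => B H (t i))
    (X := fun i (x : ι → ℝ) => (x i - x i₀) / √2)
    (hB.mono fun H h => h.hasGaussianLaw mem_range_self) (hasGaussianLaw_sub_div i₀ _)
    (fun i => ?_) (fun i j => ?_) continuous_iSup_eval (C := 1) fun x => ?_
  · rw [integral_sub_div_pi_gaussianReal]
    exact tendsto_const_nhds.congr' (hB.mono fun H h => (h.integral_eq_zero ⟨i, rfl⟩).symm)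
  · have hlim := tendsto_fbmCov_nhdsGT_zero (t i) (t j)
    simp only [hzero, ht.eq_iff] at hlim
    rw [covariance_sub_div_sqrt_two_pi_gaussianReal]
    refine hlim.congr' ?_
    filter_upwards [hB, hcov] with H hBH hcovH
    rw [hBH.covariance_eq_integral_mul ⟨i, rfl⟩ ⟨j, rfl⟩, hcovH]
  · rw [one_mul]
    exact (abs_iSup_le_norm x).trans (le_add_of_nonneg_left zero_le_one)

theorem stmt8_general {n : ℕ} [NeZero n] {t : Fin (n + 1) → ℝ}
    (hB : ∀ᶠ H in 𝓝[>] 0, IsCenteredGaussianOn (μ H) (B H) (range t))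
    (hcov : ∀ᶠ H in 𝓝[>] 0, ∀ i j,
      ∫ ω, B H (t i) ω * B H (t j) ω ∂μ H = fbmCov H (t i) (t j))
    (ht : t.Injective) (ht0 : t 0 = 0) :
    Tendsto (fun H => ∫ ω, ⨆ i, B H (t i) ω ∂μ H) (𝓝[>] 0)
      (𝓝 (1 / √2 * ∫ x : Fin (n + 1) → ℝ, max 0 ((⨆ i : Fin n, x i.succ) - x 0)
        ∂(Measure.pi fun _ : Fin (n + 1) => gaussianReal 0 1))) := by
  simpa only [iSup_sub_zero_div (sqrt_nonneg 2), integral_const_mul] using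
    tendsto_integral_iSup_nhdsGT_zero hB hcov ht ht0

end FBM

/-- for fixed `n ≥ 1`,
`lim_{H→0⁺} f(H,n) = (1/√2) E[(max_{1≤i≤n} ξ_i - ξ_0)⁺]` with i.i.d. standard normal
`ξ_0, …, ξ_n`. -/
theorem stmt8 {Ω : Type} [MeasurableSpace Ω] (μ : Measure Ω) [IsProbabilityMeasure μ]
    (B : ℝ → ℝ → Ω → ℝ) (hB : ∀ H ∈ Ioo (0:ℝ) 1, IsFBM μ H (B H))
    (n : ℕ) (hn : 1 ≤ n) :
    Tendsto (fun H => expMaxGrid μ (B H) n) (𝓝[>] (0:ℝ))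
      (𝓝 ((1 / Real.sqrt 2) *
        ∫ x : Fin (n + 1) → ℝ, max 0 ((⨆ i : Fin n, x i.succ) - x 0)
          ∂(Measure.pi fun _ : Fin (n + 1) => gaussianReal 0 1))) := by
  have : NeZero n := ⟨by omega⟩
  have hgrid (i : Fin (n + 1)) : (0 : ℝ) ≤ i / n := by positivity
  have hFBM : ∀ᶠ H in 𝓝[>] 0, IsFBM μ H (B H) := mem_of_superset (Ioo_mem_nhdsGT one_pos) hB
  refine stmt8_general (hFBM.mono fun H h => h.1.mono (range_subset_iff.2 hgrid))
    (hFBM.mono fun H h i j => h.2.2.2 _ _ (hgrid i) (hgrid j)) (fun i j hij => ?_) (by simp)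
  exact Fin.ext (by simpa [NeZero.ne] using hij)
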